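/- arXiv:1205.0829 — 3 statements merged into one kernel-verified Lean document; each statement's English description precedes it below -/
import Mathlib

section
/- Let f be a Lorenz map, C a nice interval for f, and T the transfer map to C with transfer time τ. If I is a connected component of the domain of T, then τ is constant on I, say τ|_I = n; the map f^n restricted to I is monotone and maps I onto C; and the intervals I, f(I), …, f^n(I) are pairwise disjoint. -/
open Set Filter MeasureTheory Topology
open scoped Classical

noncomputable section

/-- The standard Lorenz family `Q(x)` with critical exponent `α`,
critical point `c`, and critical values `u`, `1 - v`. -/
def lorenzQ (α u v c : ℝ) (x : ℝ) : ℝ :=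
  if x < c then u * (1 - ((c - x) / c) ^ α)
  else 1 + v * (-1 + ((x - c) / (1 - c)) ^ α)

/-- A Lorenz map on `[0,1] ∖ {c}` with critical exponent `α`, given by the data
`(u, v, c, φ, ψ)` where `φ, ψ` are orientation-preserving homeomorphisms of `[0,1]`
(smoothness is imposed separately by `LorenzMap.IsCk`). -/
structure LorenzMap (α : ℝ) where
  u : ℝ
  v : ℝ
  c : ℝ
  φ : ℝ → ℝ
  ψ : ℝ → ℝ
  hu : u ∈ Icc (0 : ℝ) 1
  hv : v ∈ Icc (0 : ℝ) 1
  hc : c ∈ Ioo (0 : ℝ) 1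
  hφ0 : φ 0 = 0
  hφ1 : φ 1 = 1
  hψ0 : ψ 0 = 0
  hψ1 : ψ 1 = 1
  hφmono : StrictMonoOn φ (Icc 0 1)
  hψmono : StrictMonoOn ψ (Icc 0 1)
  hφcont : ContinuousOn φ (Icc 0 1)
  hψcont : ContinuousOn ψ (Icc 0 1)

namespace LorenzMap

variable {α : ℝ}

/-- The underlying interval map `f(x) = φ(Q(x))` for `x < c`, `ψ(Q(x))` for `x > c`
(the value at `x = c` itself is a junk convention; `c` is not in the domain). -/
def toFun (f : LorenzMap α) : ℝ → ℝ := fun x =>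
  if x < f.c then f.φ (lorenzQ α f.u f.v f.c x) else f.ψ (lorenzQ α f.u f.v f.c x)

/-- Left critical value `ĉ₁ = lim_{x ↑ c} f(x) = φ(u)`. -/
def cv1 (f : LorenzMap α) : ℝ := f.φ f.u

/-- Right critical value `ĉ₀ = lim_{x ↓ c} f(x) = ψ(1 - v)`. -/
def cv0 (f : LorenzMap α) : ℝ := f.ψ (1 - f.v)

/-- A Lorenz map is nontrivial if `ĉ₀ < c < ĉ₁`. -/
def IsNontrivial (f : LorenzMap α) : Prop := f.cv0 < f.c ∧ f.c < f.cv1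

end LorenzMap

/-- `φ` is an orientation-preserving `C^k` diffeomorphism of `[0,1]` onto itself. -/
def IsOPDiffeo (k : ℕ) (φ : ℝ → ℝ) : Prop :=
  ContDiffOn ℝ k φ (Icc 0 1) ∧ φ 0 = 0 ∧ φ 1 = 1 ∧ StrictMonoOn φ (Icc 0 1) ∧
    ∀ x ∈ Icc (0 : ℝ) 1, 0 < derivWithin φ (Icc 0 1) x

/-- A `C^k` Lorenz map: both diffeomorphic parts are orientation-preserving `C^k`
diffeomorphisms of `[0,1]`. -/
def LorenzMap.IsCk {α : ℝ} (k : ℕ) (f : LorenzMap α) : Prop :=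
  IsOPDiffeo k f.φ ∧ IsOPDiffeo k f.ψ

/-- The Schwarzian derivative `Sf = f'''/f' - (3/2) (f''/f')²`. -/
def schwarzian (f : ℝ → ℝ) (x : ℝ) : ℝ :=
  deriv (deriv (deriv f)) x / deriv f x - (3 / 2) * (deriv (deriv f) x / deriv f x) ^ 2

/-- `f` has negative Schwarzian derivative on `[0,1] ∖ {c}`. -/
def LorenzMap.NegSchwarzian {α : ℝ} (f : LorenzMap α) : Prop :=
  ∀ x ∈ Icc (0 : ℝ) 1 \ {f.c}, schwarzian f.toFun x < 0

/-- Distortion of a diffeomorphism of `[0,1]`: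
`Dist φ = sup_{x,y ∈ [0,1]} log (φ'(x) / φ'(y))`. -/
def distortion (φ : ℝ → ℝ) : ℝ :=
  ⨆ x : Icc (0 : ℝ) 1, ⨆ y : Icc (0 : ℝ) 1,
    Real.log (derivWithin φ (Icc 0 1) x.1 / derivWithin φ (Icc 0 1) y.1)

/-- Membership in the set `K(b̄)`: `f` is a `C¹` Lorenz map with
`α^{-b̄/α} ≤ 1 - c ≤ θ α^{-b̄σ/α²}` and `Dist φ, Dist ψ ≤ δ = (1/b̄)²`. -/
def memK (α σ θ : ℝ) (bbar : ℕ) (f : LorenzMap α) : Prop :=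
  f.IsCk 1 ∧
  α ^ (-(bbar : ℝ) / α) ≤ 1 - f.c ∧
  1 - f.c ≤ θ * α ^ (-(bbar : ℝ) * σ / α ^ 2) ∧
  distortion f.φ ≤ (1 / (bbar : ℝ)) ^ 2 ∧ distortion f.ψ ≤ (1 / (bbar : ℝ)) ^ 2

/-- The monotone type with `a` ones and `b` zeros (encoded as the pair `(a, b)`)
belongs to `Ω(b̄)`: `α + σ ≤ a + 1 ≤ 2α - σ` and `b̄ ≤ b ≤ (1 + (σ/α)² - β) b̄`. -/
def memOmega (α σ β : ℝ) (bbar : ℕ) (ab : ℕ × ℕ) : Prop :=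
  1 ≤ ab.1 ∧ 1 ≤ ab.2 ∧
  α + σ ≤ (ab.1 : ℝ) + 1 ∧ (ab.1 : ℝ) + 1 ≤ 2 * α - σ ∧
  (bbar : ℝ) ≤ (ab.2 : ℝ) ∧ (ab.2 : ℝ) ≤ (1 + (σ / α) ^ 2 - β) * (bbar : ℝ)

/-- `(p,q)` is a return interval around `c` on which the first-return map of `f`
is `f^{a+1}` on `L = (p,c)` and `f^{b+1}` on `R = (c,q)`, with monotone combinatorics:
`f^i(L) ⊂ (c,1)` for `1 ≤ i ≤ a` and `f^j(R) ⊂ (0,c)` for `1 ≤ j ≤ b`,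
all intermediate iterates staying outside `(p,q)`. -/
def ReturnCond {α : ℝ} (f : LorenzMap α) (a b : ℕ) (p q : ℝ) : Prop :=
  1 ≤ a ∧ 1 ≤ b ∧ 0 ≤ p ∧ p < f.c ∧ f.c < q ∧ q ≤ 1 ∧ (0 < p ∨ q < 1) ∧
  (∀ x ∈ Ioo p f.c,
    (∀ i : ℕ, 1 ≤ i → i ≤ a → f.toFun^[i] x ∈ Ioo f.c 1 ∧ f.toFun^[i] x ∉ Ioo p q) ∧
    f.toFun^[a + 1] x ∈ Ioo p q) ∧
  (∀ x ∈ Ioo f.c q,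
    (∀ j : ℕ, 1 ≤ j → j ≤ b → f.toFun^[j] x ∈ Ioo 0 f.c ∧ f.toFun^[j] x ∉ Ioo p q) ∧
    f.toFun^[b + 1] x ∈ Ioo p q)

/-- A return interval which is maximal among all return intervals containing it. -/
def IsMaxReturnInterval {α : ℝ} (f : LorenzMap α) (a b : ℕ) (p q : ℝ) : Prop :=
  ReturnCond f a b p q ∧
  ∀ a' b' : ℕ, ∀ p' q' : ℝ, ReturnCond f a' b' p' q' → Ioo p q ⊆ Ioo p' q' →
    p = p' ∧ q = q'

/-- `g` is the renormalization of `f`, of monotone type with `a` ones and `b` zeros: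
`g` is the nontrivial Lorenz map obtained by affinely rescaling the first-return map
of `f` to the maximal return interval `(p,q)`. -/
def RenormOf {α : ℝ} (f : LorenzMap α) (a b : ℕ) (g : LorenzMap α) : Prop :=
  ∃ p q : ℝ, IsMaxReturnInterval f a b p q ∧
    g.c = (f.c - p) / (q - p) ∧ g.IsNontrivial ∧
    (∀ x ∈ Ioo p f.c, g.toFun ((x - p) / (q - p)) = (f.toFun^[a + 1] x - p) / (q - p)) ∧
    (∀ x ∈ Ioo f.c q, g.toFun ((x - p) / (q - p)) = (f.toFun^[b + 1] x - p) / (q - p))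

/-- `f` is renormalizable of monotone type `(01⋯1, 10⋯0)` with `a` ones and `b` zeros. -/
def MonRenormalizable {α : ℝ} (f : LorenzMap α) (a b : ℕ) : Prop :=
  ∃ g : LorenzMap α, RenormOf f a b g

/-- The renormalization operator (defined via choice on renormalizable maps
of monotone type; the identity on non-renormalizable maps). -/
def renormOp (α : ℝ) (f : LorenzMap α) : LorenzMap α :=
  if h : ∃ g : LorenzMap α, ∃ a b : ℕ, RenormOf f a b g then h.choose else f

/-- `f` is infinitely renormalizable with (monotone) combinatorial type
`ω = (ω₀, ω₁, …)`, each `ω n` encoded as the pair (number of ones, number of zeros). -/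
def InfRenormType (α : ℝ) (f : LorenzMap α) (ω : ℕ → ℕ × ℕ) : Prop :=
  ∀ n : ℕ, MonRenormalizable ((renormOp α)^[n] f) (ω n).1 (ω n).2

/-- `(p,q)` is a nice interval for `f`: an open subinterval of `[0,1]` containing the
critical point whose boundary orbits are disjoint from it. -/
def IsNiceInterval {α : ℝ} (f : LorenzMap α) (p q : ℝ) : Prop :=
  0 ≤ p ∧ p < f.c ∧ f.c < q ∧ q ≤ 1 ∧
  (∀ n : ℕ, f.toFun^[n] p ∉ Ioo p q) ∧ (∀ n : ℕ, f.toFun^[n] q ∉ Ioo p q)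

/-- The domain `⋃_{n ≥ 0} f^{-n}(C)` of the transfer map to `C`:
points of `[0,1]` some iterate of which lies in `C`, the critical point not being hit
before entering `C`. -/
def transferDomain {α : ℝ} (f : LorenzMap α) (C : Set ℝ) : Set ℝ :=
  {x ∈ Icc (0 : ℝ) 1 | ∃ n : ℕ, f.toFun^[n] x ∈ C ∧ ∀ j < n, f.toFun^[j] x ≠ f.c}

/-- The transfer time to `C`: the least `n ≥ 0` with `f^n(x) ∈ C`. -/
def transferTime {α : ℝ} (f : LorenzMap α) (C : Set ℝ) (x : ℝ) : ℕ :=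
  sInf {n : ℕ | f.toFun^[n] x ∈ C ∧ ∀ j < n, f.toFun^[j] x ≠ f.c}

/-- `(p,q)` contains a `δ`-scaled neighborhood of `(p',q')`: both components of the
difference have length greater than `δ (q' - p')`. -/
def ScaledInside (δ p q p' q' : ℝ) : Prop :=
  p < p' ∧ q' < q ∧ δ * (q' - p') < p' - p ∧ δ * (q' - p') < q - q'

/-- The weak Markov property: a nested sequence of nice intervals, each containing a
`δ`-scaled neighborhood of the next, with almost everywhere defined transfer maps. -/
def LorenzMap.WeakMarkov {α : ℝ} (f : LorenzMap α) : Prop :=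
  ∃ δ : ℝ, 0 < δ ∧ ∃ p q : ℕ → ℝ,
    (∀ n, IsNiceInterval f (p n) (q n)) ∧
    (∀ n, ScaledInside δ (p n) (q n) (p (n + 1)) (q (n + 1))) ∧
    (∀ n, volume (Icc (0 : ℝ) 1 \ transferDomain f (Ioo (p n) (q n))) = 0)

/-- `f` has a periodic attractor: a periodic orbit attracting an open set of points. -/
def LorenzMap.HasPeriodicAttractor {α : ℝ} (f : LorenzMap α) : Prop :=
  ∃ p ∈ Icc (0 : ℝ) 1, ∃ m : ℕ, 1 ≤ m ∧ f.toFun^[m] p = p ∧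
    ∃ U : Set ℝ, IsOpen U ∧ (U ∩ Icc (0 : ℝ) 1).Nonempty ∧
      ∀ x ∈ U ∩ Icc (0 : ℝ) 1, Tendsto (fun n => f.toFun^[n * m] x) atTop (𝓝 p)

/-- `W` is a wandering interval of `f`: a nondegenerate interval in `[0,1]` on which all
iterates are defined (no iterate meets the critical point), whose iterates are pairwise
disjoint, and whose forward orbit does not converge to a periodic orbit. -/
def LorenzMap.IsWanderingInterval {α : ℝ} (f : LorenzMap α) (W : Set ℝ) : Prop :=
  W ⊆ Icc 0 1 ∧ W.OrdConnected ∧ (∃ x ∈ W, ∃ y ∈ W, x < y) ∧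
  (∀ n : ℕ, f.c ∉ f.toFun^[n] '' W) ∧
  (∀ m n : ℕ, m ≠ n → Disjoint (f.toFun^[m] '' W) (f.toFun^[n] '' W)) ∧
  ¬ ∃ p ∈ Icc (0 : ℝ) 1, ∃ m : ℕ, 1 ≤ m ∧ f.toFun^[m] p = p ∧
      ∀ x ∈ W, Tendsto
        (fun n => Metric.infDist (f.toFun^[n] x) {y : ℝ | ∃ i < m, f.toFun^[i] p = y})
        atTop (𝓝 0)

/-!
Let `fⁿ x` be the first point of the orbit of `x` in `C = (p, q)`. We pull `C` back along the
orbit. An earlier point `y` of the orbit lies in `L = [0, p]` or `L = [q, 1]`. There `f` is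
continuous and strictly increasing, and both endpoints of `L` (a fixed point of `f` and a boundary
point of `C`) have orbits avoiding `C`. An open interval `J` around `f y` which an iterate of `f`
maps into `C` therefore contains neither endpoint of `f(L)`; so `J ⊆ f(L)`, and the preimage of
`J` in `L` is again an open interval. This yields an interval `(a, b)` around `x` which `fⁿ` maps
increasingly onto `C`, while the earlier images of `[a, b]` avoid `C`. Since the orbits of `a` and
`b` never enter `C`, this interval is the whole component of `x`. Finally, if `fⁱ y = fʲ z` with
`i < j ≤ n` and `y`, `z` in `(a, b)`, then `y` enters `C` at time `n - j + i < n`, which is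
impossible.
-/

theorem connectedComponentIn_eq_Ioo {X : Type*} [ConditionallyCompleteLinearOrder X]
    [TopologicalSpace X] [OrderTopology X] [DenselyOrdered X] {F : Set X} {a b x : X}
    (hx : x ∈ Ioo a b) (hF : Ioo a b ⊆ F) (ha : a ∉ F) (hb : b ∉ F) :
    connectedComponentIn F x = Ioo a b := by
  have hxK := mem_connectedComponentIn (hF hx)
  have hK : (connectedComponentIn F x).OrdConnected :=
    isPreconnected_connectedComponentIn.ordConnected
  refine Subset.antisymm (fun y hy => ⟨?_, ?_⟩)
    (isPreconnected_Ioo.subset_connectedComponentIn hx hF)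
  · by_contra! hya
    exact ha (connectedComponentIn_subset F x (hK.out hy hxK ⟨hya, hx.1.le⟩))
  · by_contra! hby
    exact hb (connectedComponentIn_subset F x (hK.out hxK hy ⟨hx.2.le, hby⟩))

/-- The interval `[a, b]` is (the closure of) a branch of the first entry map of `g` to `(p, q)`
with entry time `n`: `gⁿ` maps `[a, b]` increasingly and continuously with `a ↦ p`, `b ↦ q`, and
the images of `[a, b]` under lower iterates avoid `(p, q)`. -/
structure IsFirstEntryBranch {X : Type*} [LinearOrder X] [TopologicalSpace X]
    (g : X → X) (p q : X) (n : ℕ) (a b : X) : Prop where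
  lt : a < b
  continuousOn : ContinuousOn g^[n] (Icc a b)
  strictMonoOn : StrictMonoOn g^[n] (Icc a b)
  map_left : g^[n] a = p
  map_right : g^[n] b = q
  notMem : ∀ j < n, ∀ x ∈ Icc a b, g^[j] x ∉ Ioo p q

namespace IsFirstEntryBranch

section Order

variable {X : Type*} [LinearOrder X] [TopologicalSpace X] {g : X → X} {p q a b : X} {n : ℕ}

theorem zero (g : X → X) (hpq : p < q) : IsFirstEntryBranch g p q 0 p q where
  lt := hpq
  continuousOn := continuousOn_id
  strictMonoOn := strictMonoOn_id
  map_left := rfl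
  map_right := rfl
  notMem _ hj := absurd hj (Nat.not_lt_zero _)

theorem mapsTo (h : IsFirstEntryBranch g p q n a b) : MapsTo g^[n] (Ioo a b) (Ioo p q) := by
  simpa only [h.map_left, h.map_right] using h.strictMonoOn.mapsTo_Ioo

theorem iterate_notMem (h : IsFirstEntryBranch g p q n a b) {x : X} (hx : x ∈ Icc a b)
    (hout : ∀ m, g^[m] (g^[n] x) ∉ Ioo p q) (k : ℕ) : g^[k] x ∉ Ioo p q := by
  rcases lt_or_ge k n with hkn | hnk
  · exact h.notMem k hkn x hx
  · rw [← Nat.sub_add_cancel hnk, Function.iterate_add_apply]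
    exact hout (k - n)

theorem disjoint_image (h : IsFirstEntryBranch g p q n a b) {i j : ℕ} (hij : i < j)
    (hjn : j ≤ n) : Disjoint (g^[i] '' Ioo a b) (g^[j] '' Ioo a b) := by
  rw [Set.disjoint_left]
  rintro _ ⟨x, hx, rfl⟩ ⟨y, hy, hyx⟩
  have hentry : g^[n - j + i] x = g^[n] y := by
    rw [Function.iterate_add_apply, ← hyx, ← Function.iterate_add_apply, Nat.sub_add_cancel hjn]
  exact h.notMem (n - j + i) (by omega) x (Ioo_subset_Icc_self hx) (hentry ▸ h.mapsTo hy)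

theorem precomp (h : IsFirstEntryBranch g p q n a b) {a' b' : X} (hab : a' < b')
    (hg : ContinuousOn g (Icc a' b')) (hmono : StrictMonoOn g (Icc a' b'))
    (ha : g a' = a) (hb : g b' = b) (hdisj : Disjoint (Icc a' b') (Ioo p q)) :
    IsFirstEntryBranch g p q (n + 1) a' b' := by
  have hmaps : MapsTo g (Icc a' b') (Icc a b) := by
    simpa only [ha, hb] using hmono.monotoneOn.mapsTo_Icc
  refine ⟨hab, h.continuousOn.comp hg hmaps, h.strictMonoOn.comp hmono hmaps, ?_, ?_, ?_⟩
  · rw [Function.iterate_succ_apply, ha, h.map_left]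
  · rw [Function.iterate_succ_apply, hb, h.map_right]
  · rintro (_ | j) hj x hx
    · exact Set.disjoint_left.1 hdisj hx
    · exact h.notMem j (Nat.lt_of_succ_lt_succ hj) (g x) (hmaps hx)

end Order

section Topology

variable {X : Type*} [ConditionallyCompleteLinearOrder X] [TopologicalSpace X] [OrderTopology X]
  [DenselyOrdered X] {g : X → X} {p q a b : X} {n : ℕ}

theorem image_Ioo (h : IsFirstEntryBranch g p q n a b) : g^[n] '' Ioo a b = Ioo p q := by
  refine h.mapsTo.image_subset.antisymm ?_
  simpa only [h.map_left, h.map_right] using intermediate_value_Ioo h.lt.le h.continuousOn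

theorem exists_pullback (h : IsFirstEntryBranch g p q n a b) {l r x : X}
    (hg : ContinuousOn g (Icc l r)) (hmono : StrictMonoOn g (Icc l r))
    (hdisj : Disjoint (Icc l r) (Ioo p q)) (hl : ∀ m, g^[m] l ∉ Ioo p q)
    (hr : ∀ m, g^[m] r ∉ Ioo p q) (hx : x ∈ Icc l r) (hgx : g x ∈ Ioo a b) :
    ∃ a' b', x ∈ Ioo a' b' ∧ Icc a' b' ⊆ Icc l r ∧ IsFirstEntryBranch g p q (n + 1) a' b' := by
  have hlr : l ≤ r := hx.1.trans hx.2
  have hlx : g l ≤ g x := hmono.monotoneOn (left_mem_Icc.2 hlr) hx hx.1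
  have hxr : g x ≤ g r := hmono.monotoneOn hx (right_mem_Icc.2 hlr) hx.2
  have hla : g l ≤ a := by
    by_contra! hal
    exact hl (n + 1) (h.mapsTo ⟨hal, hlx.trans_lt hgx.2⟩)
  have hbr : b ≤ g r := by
    by_contra! hrb
    exact hr (n + 1) (h.mapsTo ⟨hgx.1.trans_le hxr, hrb⟩)
  obtain ⟨a', ha', rfl⟩ := intermediate_value_Icc hlr hg ⟨hla, h.lt.le.trans hbr⟩
  obtain ⟨b', hb', rfl⟩ := intermediate_value_Icc hlr hg ⟨hla.trans h.lt.le, hbr⟩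
  have hsub : Icc a' b' ⊆ Icc l r := Icc_subset_Icc ha'.1 hb'.2
  refine ⟨a', b', ⟨(hmono.lt_iff_lt ha' hx).1 hgx.1, (hmono.lt_iff_lt hx hb').1 hgx.2⟩, hsub, ?_⟩
  exact h.precomp ((hmono.lt_iff_lt ha' hb').1 h.lt) (hg.mono hsub) (hmono.mono hsub) rfl rfl
    (hdisj.mono_left hsub)

end Topology

end IsFirstEntryBranch

section LorenzQ

variable {α u v c x : ℝ}

theorem lorenzQ_of_lt (hx : x < c) : lorenzQ α u v c x = u * (1 - ((c - x) / c) ^ α) :=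
  if_pos hx

theorem lorenzQ_of_le (hx : c ≤ x) :
    lorenzQ α u v c x = 1 + v * (-1 + ((x - c) / (1 - c)) ^ α) :=
  if_neg hx.not_gt

theorem continuousOn_lorenzQ_Iio (hα : 0 ≤ α) : ContinuousOn (lorenzQ α u v c) (Iio c) := by
  have hpow : Continuous fun x : ℝ => ((c - x) / c) ^ α :=
    Continuous.rpow_const (by fun_prop) fun _ => Or.inr hα
  have hbranch : Continuous fun x : ℝ => u * (1 - ((c - x) / c) ^ α) :=
    (continuous_const.sub hpow).const_mul u
  exact hbranch.continuousOn.congr fun _ hx => lorenzQ_of_lt hx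

theorem continuousOn_lorenzQ_Ici (hα : 0 ≤ α) : ContinuousOn (lorenzQ α u v c) (Ici c) := by
  have hpow : Continuous fun x : ℝ => ((x - c) / (1 - c)) ^ α :=
    Continuous.rpow_const (by fun_prop) fun _ => Or.inr hα
  have hbranch : Continuous fun x : ℝ => 1 + v * (-1 + ((x - c) / (1 - c)) ^ α) :=
    ((hpow.const_add (-1)).const_mul v).const_add 1
  exact hbranch.continuousOn.congr fun _ hx => lorenzQ_of_le hx

theorem strictMonoOn_lorenzQ_Iio (hα : 0 < α) (hc : 0 < c) (hu : 0 < u) :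
    StrictMonoOn (lorenzQ α u v c) (Iio c) := by
  intro x hx y hy hxy
  rw [lorenzQ_of_lt hx, lorenzQ_of_lt hy]
  have hy0 : 0 ≤ (c - y) / c := div_nonneg (sub_nonneg.2 (mem_Iio.1 hy).le) hc.le
  gcongr

theorem strictMonoOn_lorenzQ_Ici (hα : 0 < α) (hc : c < 1) (hv : 0 < v) :
    StrictMonoOn (lorenzQ α u v c) (Ici c) := by
  intro x hx y hy hxy
  rw [lorenzQ_of_le hx, lorenzQ_of_le hy]
  have hc' : 0 < 1 - c := sub_pos.2 hc
  have hx0 : 0 ≤ (x - c) / (1 - c) := div_nonneg (sub_nonneg.2 hx) hc'.le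
  gcongr

theorem lorenzQ_mem_Icc_of_lt (hα : 0 ≤ α) (hu : u ∈ Icc 0 1) (hx : x ∈ Ico 0 c) :
    lorenzQ α u v c x ∈ Icc 0 1 := by
  have hc : 0 < c := hx.1.trans_lt hx.2
  have ht₀ : 0 ≤ (c - x) / c := div_nonneg (sub_nonneg.2 hx.2.le) hc.le
  have ht₁ : (c - x) / c ≤ 1 := (div_le_one hc).2 (sub_le_self c hx.1)
  have hpow₀ := Real.rpow_nonneg ht₀ α
  have hpow₁ := Real.rpow_le_one ht₀ ht₁ hα
  rw [lorenzQ_of_lt hx.2]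
  exact unitInterval.mul_mem hu ⟨sub_nonneg.2 hpow₁, sub_le_self 1 hpow₀⟩

theorem lorenzQ_mem_Icc_of_le (hα : 0 ≤ α) (hc : c < 1) (hv : v ∈ Icc 0 1) (hx : x ∈ Icc c 1) :
    lorenzQ α u v c x ∈ Icc 0 1 := by
  have hc' : 0 < 1 - c := sub_pos.2 hc
  have ht₀ : 0 ≤ (x - c) / (1 - c) := div_nonneg (sub_nonneg.2 hx.1) hc'.le
  have ht₁ : (x - c) / (1 - c) ≤ 1 := (div_le_one hc').2 (sub_le_sub_right hx.2 c)
  have hpow₀ := Real.rpow_nonneg ht₀ α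
  have hpow₁ := Real.rpow_le_one ht₀ ht₁ hα
  rw [lorenzQ_of_le hx.1]
  constructor <;> nlinarith [hv.1, hv.2]

end LorenzQ

namespace LorenzMap

variable {α : ℝ} (f : LorenzMap α) {x : ℝ}

theorem toFun_of_lt (hx : x < f.c) : f.toFun x = f.φ (lorenzQ α f.u f.v f.c x) :=
  if_pos hx

theorem toFun_of_le (hx : f.c ≤ x) : f.toFun x = f.ψ (lorenzQ α f.u f.v f.c x) :=
  if_neg hx.not_gt

theorem toFun_zero : f.toFun 0 = 0 := by
  simp [f.toFun_of_lt f.hc.1, lorenzQ_of_lt f.hc.1, f.hc.1.ne', f.hφ0]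

theorem toFun_one : f.toFun 1 = 1 := by
  simp [f.toFun_of_le f.hc.2.le, lorenzQ_of_le f.hc.2.le, (sub_pos.2 f.hc.2).ne', f.hψ1]

theorem mapsTo_φ : MapsTo f.φ (Icc 0 1) (Icc 0 1) := by
  simpa only [f.hφ0, f.hφ1] using f.hφmono.monotoneOn.mapsTo_Icc

theorem mapsTo_ψ : MapsTo f.ψ (Icc 0 1) (Icc 0 1) := by
  simpa only [f.hψ0, f.hψ1] using f.hψmono.monotoneOn.mapsTo_Icc

theorem mapsTo_toFun (hα : 0 ≤ α) : MapsTo f.toFun (Icc 0 1) (Icc 0 1) := by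
  intro x hx
  rcases lt_or_ge x f.c with hxc | hcx
  · rw [f.toFun_of_lt hxc]
    exact f.mapsTo_φ (lorenzQ_mem_Icc_of_lt hα f.hu ⟨hx.1, hxc⟩)
  · rw [f.toFun_of_le hcx]
    exact f.mapsTo_ψ (lorenzQ_mem_Icc_of_le hα f.hc.2 f.hv ⟨hcx, hx.2⟩)

theorem continuousOn_toFun_Ico (hα : 0 ≤ α) : ContinuousOn f.toFun (Ico 0 f.c) :=
  (f.hφcont.comp ((continuousOn_lorenzQ_Iio hα).mono Ico_subset_Iio_self)
    fun _ hx => lorenzQ_mem_Icc_of_lt hα f.hu hx).congr fun _ hx => f.toFun_of_lt hx.2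

theorem continuousOn_toFun_Icc (hα : 0 ≤ α) : ContinuousOn f.toFun (Icc f.c 1) :=
  (f.hψcont.comp ((continuousOn_lorenzQ_Ici hα).mono Icc_subset_Ici_self)
    fun _ hx => lorenzQ_mem_Icc_of_le hα f.hc.2 f.hv hx).congr fun _ hx => f.toFun_of_le hx.1

theorem strictMonoOn_toFun_Ico (hα : 0 < α) (hu : 0 < f.u) :
    StrictMonoOn f.toFun (Ico 0 f.c) :=
  (f.hφmono.comp ((strictMonoOn_lorenzQ_Iio hα f.hc.1 hu).mono Ico_subset_Iio_self)
    fun _ hx => lorenzQ_mem_Icc_of_lt hα.le f.hu hx).congr fun _ hx => (f.toFun_of_lt hx.2).symm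

theorem strictMonoOn_toFun_Icc (hα : 0 < α) (hv : 0 < f.v) :
    StrictMonoOn f.toFun (Icc f.c 1) :=
  (f.hψmono.comp ((strictMonoOn_lorenzQ_Ici hα f.hc.2 hv).mono Icc_subset_Ici_self)
    fun _ hx => lorenzQ_mem_Icc_of_le hα.le f.hc.2 f.hv hx).congr
      fun _ hx => (f.toFun_of_le hx.1).symm

theorem u_pos_of_toFun_ne_zero (hx : x < f.c) (hfx : f.toFun x ≠ 0) : 0 < f.u := by
  refine f.hu.1.lt_of_ne' fun hu => hfx ?_
  simp [f.toFun_of_lt hx, lorenzQ_of_lt hx, hu, f.hφ0]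

theorem v_pos_of_toFun_ne_one (hx : f.c ≤ x) (hfx : f.toFun x ≠ 1) : 0 < f.v := by
  refine f.hv.1.lt_of_ne' fun hv => hfx ?_
  simp [f.toFun_of_le hx, lorenzQ_of_le hx, hv, f.hψ1]

theorem exists_isFirstEntryBranch (hα : 0 < α) {p q : ℝ} (hnice : IsNiceInterval f p q) {n : ℕ}
    (hx : x ∈ Icc 0 1) (hentry : f.toFun^[n] x ∈ Ioo p q)
    (hfirst : ∀ j < n, f.toFun^[j] x ∉ Ioo p q) :
    ∃ a b, x ∈ Ioo a b ∧ Icc a b ⊆ Icc 0 1 ∧ IsFirstEntryBranch f.toFun p q n a b := by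
  obtain ⟨hp0, hpc, hcq, hq1, hp, hq⟩ := hnice
  have h0 (m : ℕ) : f.toFun^[m] 0 ∉ Ioo p q := by
    rw [Function.iterate_fixed f.toFun_zero]
    exact fun h => h.1.not_ge hp0
  have h1 (m : ℕ) : f.toFun^[m] 1 ∉ Ioo p q := by
    rw [Function.iterate_fixed f.toFun_one]
    exact fun h => h.2.not_ge hq1
  induction n generalizing x with
  | zero => exact ⟨p, q, hentry, Icc_subset_Icc hp0 hq1, .zero _ (hpc.trans hcq)⟩
  | succ n ih =>
    obtain ⟨a, b, hfx, -, hB⟩ := ih (f.mapsTo_toFun hα.le hx) hentry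
      fun j hj => hfirst (j + 1) (Nat.succ_lt_succ hj)
    rcases le_or_gt x p with hxp | hpx
    · -- For `u = 0` the left branch collapses to the fixed point `0`, which never enters `(p, q)`.
      have hu : 0 < f.u :=
        f.u_pos_of_toFun_ne_zero (hxp.trans_lt hpc) fun h => h0 n (h ▸ hentry)
      have hsub : Icc 0 p ⊆ Ico 0 f.c := Icc_subset_Ico_right hpc
      obtain ⟨a', b', hx', hsub', hB'⟩ := hB.exists_pullback
        ((f.continuousOn_toFun_Ico hα.le).mono hsub) ((f.strictMonoOn_toFun_Ico hα hu).mono hsub)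
        (Set.disjoint_left.2 fun _ hy hy' => hy'.1.not_ge hy.2) h0 hp ⟨hx.1, hxp⟩ hfx
      exact ⟨a', b', hx', hsub'.trans (Icc_subset_Icc_right (hpc.le.trans f.hc.2.le)), hB'⟩
    · have hqx : q ≤ x := not_lt.1 fun hxq => hfirst 0 n.succ_pos ⟨hpx, hxq⟩
      have hv : 0 < f.v :=
        f.v_pos_of_toFun_ne_one (hcq.le.trans hqx) fun h => h1 n (h ▸ hentry)
      have hsub : Icc q 1 ⊆ Icc f.c 1 := Icc_subset_Icc_left hcq.le
      obtain ⟨a', b', hx', hsub', hB'⟩ := hB.exists_pullback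
        ((f.continuousOn_toFun_Icc hα.le).mono hsub) ((f.strictMonoOn_toFun_Icc hα hv).mono hsub)
        (Set.disjoint_left.2 fun _ hy hy' => hy'.2.not_ge hy.1) hq h1 ⟨hqx, hx.2⟩ hfx
      exact ⟨a', b', hx', hsub'.trans (Icc_subset_Icc_left (f.hc.1.le.trans hcq.le)), hB'⟩

end LorenzMap

section Transfer

variable {α : ℝ} {f : LorenzMap α} {C : Set ℝ} {x : ℝ} {n : ℕ}

theorem mem_transferDomain_of_first_entry (hc : f.c ∈ C) (hx : x ∈ Icc 0 1)
    (hentry : f.toFun^[n] x ∈ C) (hfirst : ∀ j < n, f.toFun^[j] x ∉ C) :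
    x ∈ transferDomain f C :=
  ⟨hx, n, hentry, fun j hj hjc => hfirst j hj (hjc ▸ hc)⟩

theorem transferTime_eq_of_first_entry (hc : f.c ∈ C) (hentry : f.toFun^[n] x ∈ C)
    (hfirst : ∀ j < n, f.toFun^[j] x ∉ C) : transferTime f C x = n := by
  have hn : f.toFun^[n] x ∈ C ∧ ∀ j < n, f.toFun^[j] x ≠ f.c :=
    ⟨hentry, fun j hj hjc => hfirst j hj (hjc ▸ hc)⟩
  exact (Nat.sInf_le hn).antisymm (le_csInf ⟨n, hn⟩ fun m hm => not_lt.1 fun h => hfirst m h hm.1)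

theorem iterate_transferTime_mem (hx : x ∈ transferDomain f C) :
    f.toFun^[transferTime f C x] x ∈ C :=
  (Nat.sInf_mem hx.2).1

theorem iterate_notMem_of_lt_transferTime (hx : x ∈ transferDomain f C)
    (hn : n < transferTime f C x) : f.toFun^[n] x ∉ C := fun hnC =>
  Nat.notMem_of_lt_sInf hn ⟨hnC, fun j hj => (Nat.sInf_mem hx.2).2 j (hj.trans hn)⟩

namespace IsFirstEntryBranch

variable {p q a b : ℝ}

theorem transferTime_eq (h : IsFirstEntryBranch f.toFun p q n a b) (hc : f.c ∈ Ioo p q)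
    (hx : x ∈ Ioo a b) : transferTime f (Ioo p q) x = n :=
  transferTime_eq_of_first_entry hc (h.mapsTo hx) fun j hj =>
    h.notMem j hj x (Ioo_subset_Icc_self hx)

theorem connectedComponentIn_transferDomain (h : IsFirstEntryBranch f.toFun p q n a b)
    (hnice : IsNiceInterval f p q) (hsub : Icc a b ⊆ Icc 0 1) (hx : x ∈ Ioo a b) :
    connectedComponentIn (transferDomain f (Ioo p q)) x = Ioo a b := by
  obtain ⟨-, hpc, hcq, -, hp, hq⟩ := hnice
  refine connectedComponentIn_eq_Ioo hx (fun y hy => ?_) ?_ ?_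
  · have hy' := Ioo_subset_Icc_self hy
    exact mem_transferDomain_of_first_entry ⟨hpc, hcq⟩ (hsub hy') (h.mapsTo hy)
      fun j hj => h.notMem j hj y hy'
  · rintro ⟨-, k, hk, -⟩
    exact h.iterate_notMem (left_mem_Icc.2 h.lt.le) (h.map_left.symm ▸ hp) k hk
  · rintro ⟨-, k, hk, -⟩
    exact h.iterate_notMem (right_mem_Icc.2 h.lt.le) (h.map_right.symm ▸ hq) k hk

end IsFirstEntryBranch

end Transfer

theorem transfer_map_branches_general {α : ℝ} (hα : 0 < α) (f : LorenzMap α)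
    {p q : ℝ} (hnice : IsNiceInterval f p q)
    {I : Set ℝ} {x₀ : ℝ} (hx₀ : x₀ ∈ transferDomain f (Ioo p q))
    (hI : I = connectedComponentIn (transferDomain f (Ioo p q)) x₀) :
    (∀ x ∈ I, transferTime f (Ioo p q) x = transferTime f (Ioo p q) x₀) ∧
    StrictMonoOn (f.toFun^[transferTime f (Ioo p q) x₀]) I ∧
    f.toFun^[transferTime f (Ioo p q) x₀] '' I = Ioo p q ∧
    (∀ i j : ℕ, i < j → j ≤ transferTime f (Ioo p q) x₀ →
      Disjoint (f.toFun^[i] '' I) (f.toFun^[j] '' I)) := by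
  obtain ⟨a, b, hx₀ab, hsub, hB⟩ := f.exists_isFirstEntryBranch hα hnice hx₀.1
    (iterate_transferTime_mem hx₀) fun _ => iterate_notMem_of_lt_transferTime hx₀
  obtain rfl : I = Ioo a b :=
    hI.trans (hB.connectedComponentIn_transferDomain hnice hsub hx₀ab)
  exact ⟨fun x hx => hB.transferTime_eq ⟨hnice.2.1, hnice.2.2.1⟩ hx,
    hB.strictMonoOn.mono Ioo_subset_Icc_self, hB.image_Ioo, fun _ _ => hB.disjoint_image⟩

/-- Branches of the transfer map to a nice interval: on each connected
component `I` of the domain of the transfer map the transfer time `τ` is constant,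
`f^τ` maps `I` monotonically onto `C`, and `I, f(I), …, f^τ(I)` are pairwise disjoint. -/
theorem transfer_map_branches (α : ℝ) (hα : 1 < α) (f : LorenzMap α)
    (p q : ℝ) (hnice : IsNiceInterval f p q)
    (I : Set ℝ) (x₀ : ℝ) (hx₀ : x₀ ∈ transferDomain f (Ioo p q))
    (hI : I = connectedComponentIn (transferDomain f (Ioo p q)) x₀) :
    (∀ x ∈ I, transferTime f (Ioo p q) x = transferTime f (Ioo p q) x₀) ∧
    StrictMonoOn (f.toFun^[transferTime f (Ioo p q) x₀]) I ∧
    f.toFun^[transferTime f (Ioo p q) x₀] '' I = Ioo p q ∧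
    (∀ i j : ℕ, i < j → j ≤ transferTime f (Ioo p q) x₀ →
      Disjoint (f.toFun^[i] '' I) (f.toFun^[j] '' I)) :=
  transfer_map_branches_general (zero_lt_one.trans hα) f hnice hx₀ hI

end
end

section
/- Let φ₀, …, φ_{n−1} ∈ D²([0,1]), let φ = φ_{n−1} ∘ ⋯ ∘ φ₀, and let S = Σ_{j} ‖φ_j‖. Then for all x ∈ [0,1]: e^{−S} ≤ φ'(x) ≤ e^{S}, |φ''(x)| ≤ S·e^{2S}, and ‖φ‖ ≤ S·e^{S}. If moreover each φ_j ∈ D³([0,1]), then ‖φ‖₁ ≤ (1 + S)·e^{2S}·Σ_j ‖φ_j‖₁. -/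
/-!
Let `c_i = φ_{i-1} ∘ ⋯ ∘ φ_0`. The chain rule says `log c_n' = ∑_{i<n} log φ_i' ∘ c_i`. Since `φ_i'`
takes the value `1` somewhere (mean value theorem) and `N φ_i` is the derivative of `log φ_i'`, each
term is at most `‖φ_i‖`, so `|log c_n'| ≤ S`. Differentiating the identity once and twice gives

  `N c_n = ∑ (N φ_i ∘ c_i) c_i'`,
  `(N c_n)' = ∑ ((N φ_i)' ∘ c_i) c_i' ^ 2 + (N φ_i ∘ c_i) c_i''`,

and the bounds on `c_i'` and `c_i'' = N c_i * c_i'` are inserted term by term.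
-/

open Set Filter Topology

noncomputable section

/-- Derivative within `[0,1]`. -/
def derivI (φ : ℝ → ℝ) : ℝ → ℝ := derivWithin φ (Icc 0 1)

/-- The nonlinearity `Nφ = (log φ')' = φ''/φ'` (with derivatives taken within `[0,1]`). -/
def nonlin (φ : ℝ → ℝ) : ℝ → ℝ := fun x => derivI (derivI φ) x / derivI φ x

/-- The `C⁰`-nonlinearity norm `‖φ‖ = sup_{x ∈ [0,1]} |Nφ(x)|`. -/
def nlNorm (φ : ℝ → ℝ) : ℝ := ⨆ x : Icc (0 : ℝ) 1, |nonlin φ x.1|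

/-- The `C¹`-nonlinearity norm `‖φ‖₁ = max (sup |Nφ|, sup |(Nφ)'|)`. -/
def nlNorm1 (φ : ℝ → ℝ) : ℝ :=
  max (nlNorm φ) (⨆ x : Icc (0 : ℝ) 1, |derivI (nonlin φ) x.1|)

/-- `φ ∈ D^k([0,1])`: an orientation-preserving `C^k` diffeomorphism of `[0,1]`
onto itself. -/
def IsDk (k : ℕ) (φ : ℝ → ℝ) : Prop :=
  ContDiffOn ℝ k φ (Icc 0 1) ∧ φ 0 = 0 ∧ φ 1 = 1 ∧ StrictMonoOn φ (Icc 0 1) ∧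
    MapsTo φ (Icc 0 1) (Icc 0 1) ∧ ∀ x ∈ Icc (0 : ℝ) 1, 0 < derivI φ x

/-- `compFrom φs j m = φ_{j+m-1} ∘ ⋯ ∘ φ_{j+1} ∘ φ_j` (and the identity for `m = 0`). -/
def compFrom (φs : ℕ → ℝ → ℝ) (j : ℕ) : ℕ → ℝ → ℝ
  | 0 => id
  | (m + 1) => φs (j + m) ∘ compFrom φs j m

section DerivI

variable {f g : ℝ → ℝ} {x : ℝ}

lemma hasDerivWithinAt_derivI (hf : DifferentiableWithinAt ℝ f (Icc 0 1) x) :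
    HasDerivWithinAt f (derivI f x) (Icc 0 1) x :=
  hf.hasDerivWithinAt

lemma derivI_eq_of_hasDerivWithinAt {d : ℝ} (hx : x ∈ Icc (0 : ℝ) 1)
    (hf : HasDerivWithinAt f d (Icc 0 1) x) : derivI f x = d :=
  hf.derivWithin (uniqueDiffOn_Icc_zero_one x hx)

lemma derivI_id (hx : x ∈ Icc (0 : ℝ) 1) : derivI id x = 1 :=
  derivI_eq_of_hasDerivWithinAt hx (hasDerivWithinAt_id x _)

lemma derivI_comp (hg : DifferentiableWithinAt ℝ g (Icc 0 1) (f x))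
    (hf : DifferentiableWithinAt ℝ f (Icc 0 1) x) (hmaps : MapsTo f (Icc 0 1) (Icc 0 1)) :
    derivI (g ∘ f) x = derivI g (f x) * derivI f x :=
  derivWithin_comp x hg hf hmaps

lemma contDiffOn_derivI {k : ℕ} (hf : ContDiffOn ℝ (k + 1 : ℕ) f (Icc 0 1)) :
    ContDiffOn ℝ k (derivI f) (Icc 0 1) :=
  hf.derivWithin uniqueDiffOn_Icc_zero_one (by norm_cast)

lemma hasDerivWithinAt_log_derivI (hf : DifferentiableWithinAt ℝ (derivI f) (Icc 0 1) x)
    (hne : derivI f x ≠ 0) :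
    HasDerivWithinAt (fun y => Real.log (derivI f y)) (nonlin f x) (Icc 0 1) x :=
  (hasDerivWithinAt_derivI hf).log hne

lemma derivI_derivI_eq_nonlin_mul (hne : derivI f x ≠ 0) :
    derivI (derivI f) x = nonlin f x * derivI f x :=
  (div_mul_cancel₀ _ hne).symm

end DerivI

namespace IsDk

variable {f g : ℝ → ℝ} {k l : ℕ} {x : ℝ}

lemma contDiffOn (hf : IsDk k f) : ContDiffOn ℝ k f (Icc 0 1) := hf.1

lemma map_zero (hf : IsDk k f) : f 0 = 0 := hf.2.1

lemma map_one (hf : IsDk k f) : f 1 = 1 := hf.2.2.1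

lemma strictMonoOn (hf : IsDk k f) : StrictMonoOn f (Icc 0 1) := hf.2.2.2.1

lemma mapsTo (hf : IsDk k f) : MapsTo f (Icc 0 1) (Icc 0 1) := hf.2.2.2.2.1

lemma derivI_pos (hf : IsDk k f) (hx : x ∈ Icc (0 : ℝ) 1) : 0 < derivI f x := hf.2.2.2.2.2 x hx

lemma of_le (hf : IsDk l f) (hkl : k ≤ l) : IsDk k f :=
  ⟨hf.contDiffOn.of_le (by exact_mod_cast hkl), hf.2⟩

-- Valid even for `k = 0`: `derivWithin` is `0` wherever the derivative does not exist.
lemma differentiableOn (hf : IsDk k f) : DifferentiableOn ℝ f (Icc 0 1) := fun _ hx =>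
  differentiableWithinAt_of_derivWithin_ne_zero (hf.derivI_pos hx).ne'

protected lemma contDiffOn_derivI (hf : IsDk (k + 1) f) : ContDiffOn ℝ k (derivI f) (Icc 0 1) :=
  contDiffOn_derivI hf.contDiffOn

lemma differentiableOn_derivI (hf : IsDk 2 f) : DifferentiableOn ℝ (derivI f) (Icc 0 1) :=
  hf.contDiffOn_derivI.differentiableOn (by norm_num)

lemma contDiffOn_nonlin (hf : IsDk (k + 2) f) : ContDiffOn ℝ k (nonlin f) (Icc 0 1) :=
  (contDiffOn_derivI hf.contDiffOn_derivI).div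
    (hf.of_le (k + 1).le_succ).contDiffOn_derivI fun _ hx => (hf.derivI_pos hx).ne'

lemma differentiableOn_nonlin (hf : IsDk 3 f) : DifferentiableOn ℝ (nonlin f) (Icc 0 1) :=
  (contDiffOn_nonlin (k := 1) hf).differentiableOn (by norm_num)

protected lemma id : IsDk k id where
  left := contDiff_id.contDiffOn
  right := ⟨rfl, rfl, strictMono_id.strictMonoOn _, mapsTo_id _, fun _ hx =>
    zero_lt_one.trans_eq (derivI_id hx).symm⟩

lemma comp (hg : IsDk k g) (hf : IsDk k f) : IsDk k (g ∘ f) := by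
  refine ⟨hg.contDiffOn.comp hf.contDiffOn hf.mapsTo, by simp [hf.map_zero, hg.map_zero],
    by simp [hf.map_one, hg.map_one], hg.strictMonoOn.comp hf.strictMonoOn hf.mapsTo,
    hg.mapsTo.comp hf.mapsTo, fun x hx => ?_⟩
  rw [derivI_comp (hg.differentiableOn _ (hf.mapsTo hx)) (hf.differentiableOn _ hx) hf.mapsTo]
  exact mul_pos (hg.derivI_pos (hf.mapsTo hx)) (hf.derivI_pos hx)

lemma exists_derivI_eq_one (hf : IsDk k f) : ∃ c ∈ Icc (0 : ℝ) 1, derivI f c = 1 := by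
  obtain ⟨c, hc, hslope⟩ := exists_hasDerivAt_eq_slope f (derivI f) zero_lt_one
    hf.contDiffOn.continuousOn fun y hy =>
      (hasDerivWithinAt_derivI (hf.differentiableOn y (Ioo_subset_Icc_self hy))).hasDerivAt
        (Icc_mem_nhds hy.1 hy.2)
  exact ⟨c, Ioo_subset_Icc_self hc, by simp [hslope, hf.map_zero, hf.map_one]⟩

end IsDk

section Norms

variable {f : ℝ → ℝ} {x y : ℝ}

lemma nlNorm_nonneg (f : ℝ → ℝ) : 0 ≤ nlNorm f := Real.iSup_nonneg fun _ => abs_nonneg _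

lemma nlNorm_le_nlNorm1 (f : ℝ → ℝ) : nlNorm f ≤ nlNorm1 f := le_max_left _ _

lemma nlNorm1_nonneg (f : ℝ → ℝ) : 0 ≤ nlNorm1 f := (nlNorm_nonneg f).trans (nlNorm_le_nlNorm1 f)

namespace IsDk

lemma abs_nonlin_le_nlNorm (hf : IsDk 2 f) (hx : x ∈ Icc (0 : ℝ) 1) : |nonlin f x| ≤ nlNorm f :=
  le_ciSup_set (isCompact_Icc.bddAbove_image (contDiffOn_nonlin (k := 0) hf).continuousOn.abs) hx

lemma abs_derivI_nonlin_le_nlNorm1 (hf : IsDk 3 f) (hx : x ∈ Icc (0 : ℝ) 1) :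
    |derivI (nonlin f) x| ≤ nlNorm1 f :=
  have hcont : ContinuousOn (derivI (nonlin f)) (Icc 0 1) :=
    (contDiffOn_derivI (k := 0) hf.contDiffOn_nonlin).continuousOn
  (le_ciSup_set (isCompact_Icc.bddAbove_image hcont.abs) hx).trans (le_max_right _ _)

lemma abs_derivI_nonlin_mul_sq_add_le (hf : IsDk 3 f) (hx : x ∈ Icc (0 : ℝ) 1) (a b : ℝ) :
    |derivI (nonlin f) x * a ^ 2 + nonlin f x * b| ≤ nlNorm1 f * (a ^ 2 + |b|) := by
  have hnonlin : |nonlin f x| ≤ nlNorm1 f :=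
    ((hf.of_le (Nat.le_succ 2)).abs_nonlin_le_nlNorm hx).trans (nlNorm_le_nlNorm1 f)
  calc |derivI (nonlin f) x * a ^ 2 + nonlin f x * b|
      ≤ |derivI (nonlin f) x| * a ^ 2 + |nonlin f x| * |b| :=
        (abs_add_le _ _).trans_eq (by simp only [abs_mul, abs_sq])
    _ ≤ nlNorm1 f * a ^ 2 + nlNorm1 f * |b| := by
        gcongr
        exact hf.abs_derivI_nonlin_le_nlNorm1 hx
    _ = nlNorm1 f * (a ^ 2 + |b|) := (mul_add _ _ _).symm

lemma abs_log_derivI_sub_log_derivI_le (hf : IsDk 2 f) (hx : x ∈ Icc (0 : ℝ) 1)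
    (hy : y ∈ Icc (0 : ℝ) 1) :
    |Real.log (derivI f x) - Real.log (derivI f y)| ≤ nlNorm f * |x - y| :=
  (convex_Icc (0 : ℝ) 1).norm_image_sub_le_of_norm_hasDerivWithin_le
    (fun z hz => hasDerivWithinAt_log_derivI (hf.differentiableOn_derivI z hz)
      (hf.derivI_pos hz).ne')
    (fun _ hz => hf.abs_nonlin_le_nlNorm hz) hy hx

lemma abs_log_derivI_le_nlNorm (hf : IsDk 2 f) (hx : x ∈ Icc (0 : ℝ) 1) :
    |Real.log (derivI f x)| ≤ nlNorm f := by
  obtain ⟨c, hc, hfc⟩ := hf.exists_derivI_eq_one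
  have hxc : |x - c| ≤ 1 := abs_sub_le_of_le_of_le hx.1 hx.2 hc.1 hc.2 |>.trans_eq (sub_zero 1)
  calc |Real.log (derivI f x)| = |Real.log (derivI f x) - Real.log (derivI f c)| := by simp [hfc]
    _ ≤ nlNorm f * |x - c| := hf.abs_log_derivI_sub_log_derivI_le hx hc
    _ ≤ nlNorm f := mul_le_of_le_one_right (nlNorm_nonneg f) hxc

end IsDk

end Norms

section CompositionFormulas

variable {φs : ℕ → ℝ → ℝ} {j n k : ℕ} {x : ℝ}

lemma isDk_compFrom (hφ : ∀ i < n, IsDk k (φs (j + i))) : IsDk k (compFrom φs j n) := by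
  induction n with
  | zero => exact IsDk.id
  | succ n ih => exact (hφ n n.lt_succ_self).comp (ih fun i hi => hφ i (hi.trans n.lt_succ_self))

lemma isDk_compFrom_of_lt (hφ : ∀ i < n, IsDk k (φs (j + i))) {i : ℕ} (hi : i < n) :
    IsDk k (compFrom φs j i) :=
  isDk_compFrom fun m hm => hφ m (hm.trans hi)

lemma log_derivI_compFrom (hφ : ∀ i < n, IsDk k (φs (j + i))) (hx : x ∈ Icc (0 : ℝ) 1) :
    Real.log (derivI (compFrom φs j n) x) =
      ∑ i ∈ Finset.range n, Real.log (derivI (φs (j + i)) (compFrom φs j i x)) := by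
  induction n with
  | zero => simp [compFrom, derivI_id hx]
  | succ n ih =>
    have hc : IsDk k (compFrom φs j n) := isDk_compFrom_of_lt hφ n.lt_succ_self
    have hφn : IsDk k (φs (j + n)) := hφ n n.lt_succ_self
    rw [compFrom, derivI_comp (hφn.differentiableOn _ (hc.mapsTo hx)) (hc.differentiableOn _ hx)
      hc.mapsTo, Real.log_mul (hφn.derivI_pos (hc.mapsTo hx)).ne' (hc.derivI_pos hx).ne',
      ih fun i hi => hφ i (hi.trans n.lt_succ_self), Finset.sum_range_succ, add_comm]

lemma nonlin_compFrom (hφ : ∀ i < n, IsDk 2 (φs (j + i))) (hx : x ∈ Icc (0 : ℝ) 1) :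
    nonlin (compFrom φs j n) x =
      ∑ i ∈ Finset.range n,
        nonlin (φs (j + i)) (compFrom φs j i x) * derivI (compFrom φs j i) x := by
  have hc : IsDk 2 (compFrom φs j n) := isDk_compFrom hφ
  have hlog := hasDerivWithinAt_log_derivI (hc.differentiableOn_derivI x hx) (hc.derivI_pos hx).ne'
  have hsum : HasDerivWithinAt
      (fun y => ∑ i ∈ Finset.range n, Real.log (derivI (φs (j + i)) (compFrom φs j i y)))
      (∑ i ∈ Finset.range n, nonlin (φs (j + i)) (compFrom φs j i x) * derivI (compFrom φs j i) x)
      (Icc 0 1) x := by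
    refine HasDerivWithinAt.fun_sum fun i hi => ?_
    have hφi := hφ i (Finset.mem_range.1 hi)
    have hci := isDk_compFrom_of_lt hφ (Finset.mem_range.1 hi)
    exact (hasDerivWithinAt_log_derivI (hφi.differentiableOn_derivI _ (hci.mapsTo hx))
      (hφi.derivI_pos (hci.mapsTo hx)).ne').comp x
        (hasDerivWithinAt_derivI (hci.differentiableOn x hx)) hci.mapsTo
  exact (uniqueDiffOn_Icc_zero_one x hx).eq_deriv _ hlog
    (hsum.congr_of_mem (fun y hy => log_derivI_compFrom hφ hy) hx)

lemma derivI_nonlin_compFrom (hφ : ∀ i < n, IsDk 3 (φs (j + i))) (hx : x ∈ Icc (0 : ℝ) 1) :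
    derivI (nonlin (compFrom φs j n)) x =
      ∑ i ∈ Finset.range n,
        (derivI (nonlin (φs (j + i))) (compFrom φs j i x) * derivI (compFrom φs j i) x ^ 2 +
          nonlin (φs (j + i)) (compFrom φs j i x) * derivI (derivI (compFrom φs j i)) x) := by
  have hφ₂ : ∀ i < n, IsDk 2 (φs (j + i)) := fun i hi => (hφ i hi).of_le (Nat.le_succ 2)
  refine derivI_eq_of_hasDerivWithinAt hx (HasDerivWithinAt.congr_of_mem
    (HasDerivWithinAt.fun_sum fun i hi => ?_) (fun y hy => nonlin_compFrom hφ₂ hy) hx)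
  have hφi := hφ i (Finset.mem_range.1 hi)
  have hci := isDk_compFrom_of_lt hφ₂ (Finset.mem_range.1 hi)
  have hnonlin := (hasDerivWithinAt_derivI (hφi.differentiableOn_nonlin _ (hci.mapsTo hx))).comp x
    (hasDerivWithinAt_derivI (hci.differentiableOn x hx)) hci.mapsTo
  have hderivI := hasDerivWithinAt_derivI (hci.differentiableOn_derivI x hx)
  exact (hnonlin.mul hderivI).congr_deriv (by rw [Function.comp_apply]; ring)

end CompositionFormulas

section CompositionBounds

/-- The total nonlinearity `S = ∑ ‖φ_i‖` of the maps `φ_j, …, φ_{j+n-1}` composed in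
`compFrom φs j n`, in terms of which the composition is estimated. -/
def totalNonlin (φs : ℕ → ℝ → ℝ) (j n : ℕ) : ℝ := ∑ i ∈ Finset.range n, nlNorm (φs (j + i))

variable {φs : ℕ → ℝ → ℝ} {j n : ℕ} {x : ℝ}

lemma totalNonlin_nonneg (φs : ℕ → ℝ → ℝ) (j n : ℕ) : 0 ≤ totalNonlin φs j n :=
  Finset.sum_nonneg fun _ _ => nlNorm_nonneg _

lemma totalNonlin_mono (φs : ℕ → ℝ → ℝ) (j : ℕ) : Monotone (totalNonlin φs j) := fun _ _ h =>
  Finset.sum_le_sum_of_subset_of_nonneg (Finset.range_mono h) fun _ _ _ => nlNorm_nonneg _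

lemma totalNonlin_le_sum_nlNorm1 (φs : ℕ → ℝ → ℝ) (j n : ℕ) :
    totalNonlin φs j n ≤ ∑ i ∈ Finset.range n, nlNorm1 (φs (j + i)) :=
  Finset.sum_le_sum fun _ _ => nlNorm_le_nlNorm1 _

lemma abs_log_derivI_compFrom_le (hφ : ∀ i < n, IsDk 2 (φs (j + i))) (hx : x ∈ Icc (0 : ℝ) 1) :
    |Real.log (derivI (compFrom φs j n) x)| ≤ totalNonlin φs j n := by
  rw [log_derivI_compFrom hφ hx]
  refine (Finset.abs_sum_le_sum_abs _ _).trans (Finset.sum_le_sum fun i hi => ?_)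
  have hi := Finset.mem_range.1 hi
  exact (hφ i hi).abs_log_derivI_le_nlNorm ((isDk_compFrom_of_lt hφ hi).mapsTo hx)

lemma exp_neg_totalNonlin_le_derivI_compFrom (hφ : ∀ i < n, IsDk 2 (φs (j + i)))
    (hx : x ∈ Icc (0 : ℝ) 1) :
    Real.exp (-totalNonlin φs j n) ≤ derivI (compFrom φs j n) x :=
  (Real.le_log_iff_exp_le ((isDk_compFrom hφ).derivI_pos hx)).1
    (abs_le.1 (abs_log_derivI_compFrom_le hφ hx)).1

lemma derivI_compFrom_le_exp (hφ : ∀ i < n, IsDk 2 (φs (j + i))) (hx : x ∈ Icc (0 : ℝ) 1) :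
    derivI (compFrom φs j n) x ≤ Real.exp (totalNonlin φs j n) :=
  (Real.log_le_iff_le_exp ((isDk_compFrom hφ).derivI_pos hx)).1
    (abs_le.1 (abs_log_derivI_compFrom_le hφ hx)).2

lemma abs_nonlin_compFrom_le (hφ : ∀ i < n, IsDk 2 (φs (j + i))) (hx : x ∈ Icc (0 : ℝ) 1) :
    |nonlin (compFrom φs j n) x| ≤ totalNonlin φs j n * Real.exp (totalNonlin φs j n) := by
  rw [nonlin_compFrom hφ hx]
  calc |∑ i ∈ Finset.range n,
        nonlin (φs (j + i)) (compFrom φs j i x) * derivI (compFrom φs j i) x|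
      ≤ ∑ i ∈ Finset.range n, nlNorm (φs (j + i)) * Real.exp (totalNonlin φs j n) := by
        refine (Finset.abs_sum_le_sum_abs _ _).trans (Finset.sum_le_sum fun i hi => ?_)
        have hi := Finset.mem_range.1 hi
        have hci := isDk_compFrom_of_lt hφ hi
        have hderiv : derivI (compFrom φs j i) x ≤ Real.exp (totalNonlin φs j n) :=
          (derivI_compFrom_le_exp (fun m hm => hφ m (hm.trans hi)) hx).trans
            (Real.exp_le_exp.2 (totalNonlin_mono φs j hi.le))
        rw [abs_mul, abs_of_pos (hci.derivI_pos hx)]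
        exact mul_le_mul ((hφ i hi).abs_nonlin_le_nlNorm (hci.mapsTo hx)) hderiv
          (hci.derivI_pos hx).le (nlNorm_nonneg _)
    _ = totalNonlin φs j n * Real.exp (totalNonlin φs j n) := (Finset.sum_mul _ _ _).symm

lemma abs_derivI_derivI_compFrom_le (hφ : ∀ i < n, IsDk 2 (φs (j + i)))
    (hx : x ∈ Icc (0 : ℝ) 1) :
    |derivI (derivI (compFrom φs j n)) x| ≤
      totalNonlin φs j n * Real.exp (2 * totalNonlin φs j n) := by
  have hpos := (isDk_compFrom hφ).derivI_pos hx
  have hS := totalNonlin_nonneg φs j n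
  calc |derivI (derivI (compFrom φs j n)) x|
      = |nonlin (compFrom φs j n) x| * derivI (compFrom φs j n) x := by
        rw [derivI_derivI_eq_nonlin_mul hpos.ne', abs_mul, abs_of_pos hpos]
    _ ≤ totalNonlin φs j n * Real.exp (totalNonlin φs j n) * Real.exp (totalNonlin φs j n) := by
        gcongr
        exacts [abs_nonlin_compFrom_le hφ hx, derivI_compFrom_le_exp hφ hx]
    _ = totalNonlin φs j n * Real.exp (2 * totalNonlin φs j n) := by
        rw [two_mul, Real.exp_add, mul_assoc]

lemma abs_derivI_nonlin_compFrom_le (hφ : ∀ i < n, IsDk 3 (φs (j + i)))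
    (hx : x ∈ Icc (0 : ℝ) 1) :
    |derivI (nonlin (compFrom φs j n)) x| ≤
      (1 + totalNonlin φs j n) * Real.exp (2 * totalNonlin φs j n) *
        ∑ i ∈ Finset.range n, nlNorm1 (φs (j + i)) := by
  rw [derivI_nonlin_compFrom hφ hx, Finset.mul_sum]
  refine (Finset.abs_sum_le_sum_abs _ _).trans (Finset.sum_le_sum fun i hi => ?_)
  have hi := Finset.mem_range.1 hi
  have hφ₂ : ∀ m < i, IsDk 2 (φs (j + m)) := fun m hm =>
    (hφ m (hm.trans hi)).of_le (Nat.le_succ 2)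
  have hcx := (isDk_compFrom hφ₂).mapsTo hx
  have hpos := ((isDk_compFrom hφ₂).derivI_pos hx).le
  have hnorm := nlNorm1_nonneg (φs (j + i))
  have hS := totalNonlin_nonneg φs j i
  have hmono := totalNonlin_mono φs j hi.le
  have hderiv := derivI_compFrom_le_exp hφ₂ hx
  have hderiv₂ := abs_derivI_derivI_compFrom_le hφ₂ hx
  refine ((hφ i hi).abs_derivI_nonlin_mul_sq_add_le hcx _ _).trans ?_
  set c := compFrom φs j i
  set S := totalNonlin φs j
  calc nlNorm1 (φs (j + i)) * (derivI c x ^ 2 + |derivI (derivI c) x|)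
      ≤ nlNorm1 (φs (j + i)) * (Real.exp (S i) ^ 2 + S i * Real.exp (2 * S i)) := by gcongr
    _ = (1 + S i) * Real.exp (2 * S i) * nlNorm1 (φs (j + i)) := by
        rw [two_mul, Real.exp_add]; ring
    _ ≤ (1 + S n) * Real.exp (2 * S n) * nlNorm1 (φs (j + i)) := by gcongr; linarith

lemma nlNorm_compFrom_le (hφ : ∀ i < n, IsDk 2 (φs (j + i))) :
    nlNorm (compFrom φs j n) ≤ totalNonlin φs j n * Real.exp (totalNonlin φs j n) :=
  ciSup_le fun x => abs_nonlin_compFrom_le hφ x.2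

lemma nlNorm1_compFrom_le (hφ : ∀ i < n, IsDk 3 (φs (j + i))) :
    nlNorm1 (compFrom φs j n) ≤
      (1 + totalNonlin φs j n) * Real.exp (2 * totalNonlin φs j n) *
        ∑ i ∈ Finset.range n, nlNorm1 (φs (j + i)) := by
  refine max_le ?_ (ciSup_le fun x => abs_derivI_nonlin_compFrom_le hφ x.2)
  have hS := totalNonlin_nonneg φs j n
  have hST := totalNonlin_le_sum_nlNorm1 φs j n
  set S := totalNonlin φs j n
  set T := ∑ i ∈ Finset.range n, nlNorm1 (φs (j + i))
  have hT : 0 ≤ T := hS.trans hST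
  calc nlNorm (compFrom φs j n)
      ≤ S * Real.exp S := nlNorm_compFrom_le fun i hi => (hφ i hi).of_le (Nat.le_succ 2)
    _ ≤ T * Real.exp (2 * S) := by gcongr; linarith
    _ = 1 * Real.exp (2 * S) * T := by ring
    _ ≤ (1 + S) * Real.exp (2 * S) * T := by gcongr; linarith

end CompositionBounds

/-- bounds for finite compositions of diffeomorphisms in terms of the
total nonlinearity `S = Σ ‖φ_j‖`: `e^{-S} ≤ φ' ≤ e^S`, `|φ''| ≤ S e^{2S}`,
`‖φ‖ ≤ S e^S`, and (for `C³` maps) `‖φ‖₁ ≤ (1 + S) e^{2S} Σ ‖φ_j‖₁`. -/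
theorem finite_composition_bounds (n : ℕ) (φs : ℕ → ℝ → ℝ)
    (hφ : ∀ j < n, IsDk 2 (φs j)) :
    (∀ x ∈ Icc (0 : ℝ) 1,
      Real.exp (-(∑ j ∈ Finset.range n, nlNorm (φs j))) ≤ derivI (compFrom φs 0 n) x ∧
      derivI (compFrom φs 0 n) x ≤ Real.exp (∑ j ∈ Finset.range n, nlNorm (φs j)) ∧
      |derivI (derivI (compFrom φs 0 n)) x| ≤
        (∑ j ∈ Finset.range n, nlNorm (φs j)) *
          Real.exp (2 * ∑ j ∈ Finset.range n, nlNorm (φs j))) ∧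
    nlNorm (compFrom φs 0 n) ≤
      (∑ j ∈ Finset.range n, nlNorm (φs j)) *
        Real.exp (∑ j ∈ Finset.range n, nlNorm (φs j)) ∧
    ((∀ j < n, IsDk 3 (φs j)) →
      nlNorm1 (compFrom φs 0 n) ≤
        (1 + ∑ j ∈ Finset.range n, nlNorm (φs j)) *
          Real.exp (2 * ∑ j ∈ Finset.range n, nlNorm (φs j)) *
          ∑ j ∈ Finset.range n, nlNorm1 (φs j)) := by
  have hS : ∑ j ∈ Finset.range n, nlNorm (φs j) = totalNonlin φs 0 n := by
    simp only [totalNonlin, zero_add]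
  have hφ₀ : ∀ i < n, IsDk 2 (φs (0 + i)) := by simpa only [zero_add] using hφ
  rw [hS]
  refine ⟨fun x hx => ⟨exp_neg_totalNonlin_le_derivI_compFrom hφ₀ hx,
    derivI_compFrom_le_exp hφ₀ hx, abs_derivI_derivI_compFrom_le hφ₀ hx⟩,
    nlNorm_compFrom_le hφ₀, fun hφ₃ => ?_⟩
  have hφ₃₀ : ∀ i < n, IsDk 3 (φs (0 + i)) := by simpa only [zero_add] using hφ₃
  simpa only [zero_add] using nlNorm1_compFrom_le hφ₃₀

end
end

section
/- For every φ ∈ D²([0,1]) and every nondegenerate closed interval I ⊆ [0,1], the zoom Z(φ;I) satisfies d(Z(φ;I), P) ≤ |I| · d(φ, P), where d denotes the distance induced by the C⁰-nonlinearity norm. -/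
open Set Filter Topology

noncomputable section

/-- The zoom of `g` on the interval `[a,b]`: `Z(g;[a,b]) = ζ_{g([a,b])}⁻¹ ∘ g ∘ ζ_{[a,b]}`. -/
def zoom (g : ℝ → ℝ) (a b : ℝ) : ℝ → ℝ := fun t =>
  (g (a + (b - a) * t) - g a) / (g b - g a)

/-- Distance (in the `C⁰`-nonlinearity norm) from `φ` to the family `P` of pure maps;
the pure maps `μ_r`, `r > -1` (restrictions of `x^α` away from the critical point,
rescaled to `[0,1]`, including the identity) have nonlinearity
`Nμ_r(x) = r(α-1)/(1+rx)`. -/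
def distToPure (α : ℝ) (φ : ℝ → ℝ) : ℝ :=
  ⨅ r : {r : ℝ // -1 < r}, ⨆ x : Icc (0 : ℝ) 1,
    |nonlin φ x.1 - r.1 * (α - 1) / (1 + r.1 * x.1)|

/-
Zooming onto `[a, b]` multiplies the nonlinearity by the length of the interval:
`N(Z(φ; [a, b])) (t) = (b - a) Nφ(a + (b - a) t)`. The family of pure nonlinearities is invariant
under this action, the parameter `r` being sent to `r (b - a) / (1 + r a)`. Hence a pure map at
distance `D` from `φ` yields a pure map at distance at most `|b - a| D` from the zoom of `φ`.
-/

section Segment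

variable {a b t : ℝ} {s : Set ℝ}

theorem add_sub_mul_mem_of_convex (hs : Convex ℝ s) (ha : a ∈ s) (hb : b ∈ s)
    (ht : t ∈ Icc (0 : ℝ) 1) : a + (b - a) * t ∈ s := by
  simpa only [smul_eq_mul, mul_comm] using hs.add_smul_sub_mem ha hb ht

theorem hasDerivWithinAt_comp_segment {F : Type*} [NormedAddCommGroup F] [NormedSpace ℝ F]
    {g : ℝ → F} {g' : F} (hs : Convex ℝ s) (ha : a ∈ s) (hb : b ∈ s)
    (hg : HasDerivWithinAt g g' s (a + (b - a) * t)) :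
    HasDerivWithinAt (fun x => g (a + (b - a) * x)) ((b - a) • g') (Icc 0 1) t := by
  have h_affine : HasDerivWithinAt (fun x : ℝ => a + (b - a) * x) (b - a) (Icc 0 1) t := by
    simpa only [id, mul_one] using
      (((hasDerivAt_id t).const_mul (b - a)).const_add a).hasDerivWithinAt
  exact hg.scomp t h_affine fun x hx => add_sub_mul_mem_of_convex hs ha hb hx

end Segment

section Zoom

variable {φ : ℝ → ℝ} {a b t : ℝ}

theorem derivI_zoom (hφ : DifferentiableOn ℝ φ (Icc 0 1)) (ha : a ∈ Icc (0 : ℝ) 1)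
    (hb : b ∈ Icc (0 : ℝ) 1) (ht : t ∈ Icc (0 : ℝ) 1) :
    derivI (zoom φ a b) t = (b - a) * derivI φ (a + (b - a) * t) / (φ b - φ a) := by
  have h_mem := add_sub_mul_mem_of_convex (convex_Icc 0 1) ha hb ht
  have h_comp := hasDerivWithinAt_comp_segment (convex_Icc 0 1) ha hb (hφ _ h_mem).hasDerivWithinAt
  exact ((h_comp.sub_const (φ a)).div_const (φ b - φ a)).derivWithin
    (uniqueDiffOn_Icc zero_lt_one t ht)

theorem derivI_derivI_zoom (hφ : DifferentiableOn ℝ φ (Icc 0 1))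
    (hφ' : DifferentiableOn ℝ (derivI φ) (Icc 0 1)) (ha : a ∈ Icc (0 : ℝ) 1)
    (hb : b ∈ Icc (0 : ℝ) 1) (ht : t ∈ Icc (0 : ℝ) 1) :
    derivI (derivI (zoom φ a b)) t =
      (b - a) * ((b - a) * derivI (derivI φ) (a + (b - a) * t)) / (φ b - φ a) := by
  have h_mem := add_sub_mul_mem_of_convex (convex_Icc 0 1) ha hb ht
  have h_comp := hasDerivWithinAt_comp_segment (convex_Icc 0 1) ha hb (hφ' _ h_mem).hasDerivWithinAt
  have h_deriv := (h_comp.const_mul (b - a)).div_const (φ b - φ a)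
  exact (h_deriv.congr (fun x hx => derivI_zoom hφ ha hb hx)
    (derivI_zoom hφ ha hb ht)).derivWithin (uniqueDiffOn_Icc zero_lt_one t ht)

theorem nonlin_zoom (hφ : DifferentiableOn ℝ φ (Icc 0 1))
    (hφ' : DifferentiableOn ℝ (derivI φ) (Icc 0 1)) (ha : a ∈ Icc (0 : ℝ) 1)
    (hb : b ∈ Icc (0 : ℝ) 1) (hab : φ a ≠ φ b) (ht : t ∈ Icc (0 : ℝ) 1) :
    nonlin (zoom φ a b) t = (b - a) * nonlin φ (a + (b - a) * t) := by
  have h_length : b - a ≠ 0 := sub_ne_zero.2 fun h => hab (congrArg φ h.symm)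
  have h_image : φ b - φ a ≠ 0 := sub_ne_zero.2 hab.symm
  unfold nonlin
  rw [derivI_derivI_zoom hφ hφ' ha hb ht, derivI_zoom hφ ha hb ht,
    div_div_div_cancel_right₀ h_image, mul_div_mul_left _ _ h_length, mul_div_assoc]

theorem contDiffOn_derivI_s18 {m n : WithTop ℕ∞} (hφ : ContDiffOn ℝ n φ (Icc 0 1))
    (hmn : m + 1 ≤ n) : ContDiffOn ℝ m (derivI φ) (Icc 0 1) :=
  hφ.derivWithin (uniqueDiffOn_Icc zero_lt_one) hmn

theorem continuousOn_nonlin (hφ : ContDiffOn ℝ 2 φ (Icc 0 1))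
    (hφ' : ∀ x ∈ Icc (0 : ℝ) 1, derivI φ x ≠ 0) : ContinuousOn (nonlin φ) (Icc 0 1) := by
  have h_deriv : ContDiffOn ℝ 1 (derivI φ) (Icc 0 1) := contDiffOn_derivI_s18 hφ one_add_one_eq_two.le
  have h_deriv₂ : ContDiffOn ℝ 0 (derivI (derivI φ)) (Icc 0 1) :=
    contDiffOn_derivI_s18 h_deriv (zero_add 1).le
  exact h_deriv₂.continuousOn.div h_deriv.continuousOn hφ'

end Zoom

section PureNonlinearity

variable {α r a b t x : ℝ}

/-- The nonlinearity `Nμ_r` of the pure map `μ_r` of exponent `α`, for `r > -1`. -/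
def pureNonlin (α r x : ℝ) : ℝ := r * (α - 1) / (1 + r * x)

/-- The parameter of the zoom of a pure map: `Z(μ_r; [a, b]) = μ_{zoomParam r a b}`. -/
def zoomParam (r a b : ℝ) : ℝ := r * (b - a) / (1 + r * a)

theorem one_add_mul_pos (hr : -1 < r) (hx : x ∈ Icc (0 : ℝ) 1) : 0 < 1 + r * x := by
  have h_one : 0 < 1 + r := by linarith
  simpa only [add_sub_cancel_left, mem_Ioi] using
    add_sub_mul_mem_of_convex (convex_Ioi 0) (mem_Ioi.2 one_pos) (mem_Ioi.2 h_one) hx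

theorem neg_one_lt_zoomParam (hr : -1 < r) (ha : a ∈ Icc (0 : ℝ) 1)
    (hb : b ∈ Icc (0 : ℝ) 1) : -1 < zoomParam r a b := by
  rw [zoomParam, lt_div_iff₀ (one_add_mul_pos hr ha)]
  linarith [one_add_mul_pos hr hb]

theorem pureNonlin_zoomParam (ha : 1 + r * a ≠ 0) :
    pureNonlin α (zoomParam r a b) t = (b - a) * pureNonlin α r (a + (b - a) * t) := by
  have h_den : 1 + zoomParam r a b * t = (1 + r * (a + (b - a) * t)) / (1 + r * a) := by
    rw [zoomParam]
    field_simp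
    ring
  rw [pureNonlin, h_den, zoomParam, div_mul_eq_mul_div, div_div_div_cancel_right₀ ha, pureNonlin]
  ring

theorem continuousOn_pureNonlin (hr : -1 < r) : ContinuousOn (pureNonlin α r) (Icc 0 1) :=
  ContinuousOn.div (by fun_prop) (by fun_prop) fun _ hx => (one_add_mul_pos hr hx).ne'

end PureNonlinearity

section Distance

variable {α r a b : ℝ} {φ : ℝ → ℝ}

/-- The distance from `φ` to the pure map `μ_r` in the `C⁰`-nonlinearity norm, with the junk
value `0` when `Nφ - Nμ_r` is unbounded on `[0, 1]`. -/
def pureDist (α : ℝ) (φ : ℝ → ℝ) (r : ℝ) : ℝ :=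
  ⨆ x : Icc (0 : ℝ) 1, |nonlin φ x - pureNonlin α r x|

theorem distToPure_eq_iInf_pureDist (α : ℝ) (φ : ℝ → ℝ) :
    distToPure α φ = ⨅ r : {r : ℝ // -1 < r}, pureDist α φ r :=
  rfl

theorem pureDist_nonneg (α : ℝ) (φ : ℝ → ℝ) (r : ℝ) : 0 ≤ pureDist α φ r :=
  Real.iSup_nonneg fun _ => abs_nonneg _

theorem distToPure_le_pureDist (α : ℝ) (φ : ℝ → ℝ) (hr : -1 < r) :
    distToPure α φ ≤ pureDist α φ r :=
  ciInf_le (f := fun s : {s : ℝ // -1 < s} => pureDist α φ s)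
    ⟨0, forall_mem_range.2 fun s => pureDist_nonneg α φ s⟩ ⟨r, hr⟩

theorem abs_nonlin_sub_pureNonlin_le_pureDist (hφ : ContinuousOn (nonlin φ) (Icc 0 1))
    (hr : -1 < r) {x : ℝ} (hx : x ∈ Icc (0 : ℝ) 1) :
    |nonlin φ x - pureNonlin α r x| ≤ pureDist α φ r := by
  have h_cont : ContinuousOn (fun x => |nonlin φ x - pureNonlin α r x|) (Icc 0 1) :=
    (hφ.sub (continuousOn_pureNonlin hr)).abs
  have h_bdd := isCompact_Icc.bddAbove_image h_cont
  rw [image_eq_range] at h_bdd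
  exact le_ciSup h_bdd ⟨x, hx⟩

theorem pureDist_zoom_le (hφ : ContDiffOn ℝ 2 φ (Icc 0 1))
    (hφ' : ∀ x ∈ Icc (0 : ℝ) 1, derivI φ x ≠ 0) (ha : a ∈ Icc (0 : ℝ) 1)
    (hb : b ∈ Icc (0 : ℝ) 1) (hab : φ a ≠ φ b) (hr : -1 < r) :
    pureDist α (zoom φ a b) (zoomParam r a b) ≤ |b - a| * pureDist α φ r := by
  have h_diff : DifferentiableOn ℝ φ (Icc 0 1) := hφ.differentiableOn two_ne_zero
  have h_diff' : DifferentiableOn ℝ (derivI φ) (Icc 0 1) :=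
    (contDiffOn_derivI_s18 hφ one_add_one_eq_two.le).differentiableOn one_ne_zero
  have : Nonempty (Icc (0 : ℝ) 1) := ⟨⟨a, ha⟩⟩
  refine ciSup_le fun ⟨t, ht⟩ => ?_
  rw [nonlin_zoom h_diff h_diff' ha hb hab ht, pureNonlin_zoomParam (one_add_mul_pos hr ha).ne',
    ← mul_sub, abs_mul]
  gcongr
  exact abs_nonlin_sub_pureNonlin_le_pureDist (continuousOn_nonlin hφ hφ') hr
    (add_sub_mul_mem_of_convex (convex_Icc 0 1) ha hb ht)

theorem zoom_contracts_to_pure_general (α : ℝ) (hφ : ContDiffOn ℝ 2 φ (Icc 0 1))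
    (hφ' : ∀ x ∈ Icc (0 : ℝ) 1, derivI φ x ≠ 0) (ha : a ∈ Icc (0 : ℝ) 1)
    (hb : b ∈ Icc (0 : ℝ) 1) (hab : φ a ≠ φ b) :
    distToPure α (zoom φ a b) ≤ |b - a| * distToPure α φ := by
  have : Nonempty {r : ℝ // -1 < r} := ⟨⟨0, neg_one_lt_zero⟩⟩
  rw [distToPure_eq_iInf_pureDist α φ, Real.mul_iInf_of_nonneg (abs_nonneg _)]
  exact le_ciInf fun ⟨r, hr⟩ =>
    (distToPure_le_pureDist α _ (neg_one_lt_zoomParam hr ha hb)).trans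
      (pureDist_zoom_le hφ hφ' ha hb hab hr)

end Distance

/-- zoom operators contract the distance to the pure maps:
`d(Z(φ;I), P) ≤ |I| · d(φ, P)`. -/
theorem zoom_contracts_to_pure (α : ℝ) (hα : 1 < α) (φ : ℝ → ℝ) (hφ : IsDk 2 φ)
    (a b : ℝ) (ha : 0 ≤ a) (hab : a < b) (hb : b ≤ 1) :
    distToPure α (zoom φ a b) ≤ (b - a) * distToPure α φ := by
  have ha' : a ∈ Icc (0 : ℝ) 1 := ⟨ha, hab.le.trans hb⟩
  have hb' : b ∈ Icc (0 : ℝ) 1 := ⟨ha.trans hab.le, hb⟩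
  obtain ⟨h_smooth, -, -, h_mono, -, h_deriv_pos⟩ := hφ
  simpa only [abs_of_pos (sub_pos.2 hab)] using
    zoom_contracts_to_pure_general α h_smooth (fun x hx => (h_deriv_pos x hx).ne') ha' hb'
      (h_mono ha' hb' hab).ne

end
end
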